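/- For every fixed real number $q$, $\lim_{x \to +\infty} \dfrac{\sqrt{2\pi}\, e^{2q - x}\, (x-1)\, (x - 2q)^{x-3} \;-\; \Gamma\!\left(x - \tfrac{3}{2}\right) \;-\; \tfrac{1}{2}\,\Gamma\!\left(x - \tfrac{5}{2}\right)\left(-\tfrac{71}{12} + 12 q - 4 q^2\right)}{\Gamma\!\left(x - \tfrac{7}{2}\right)} \;=\; \frac{1}{4}\left(\frac{11545}{288} - 131 q + \frac{419 q^2}{3} - \frac{176 q^3}{3} + 8 q^4\right)$. (This identifies the polynomial $\mathcal{P}_2(q)$ in the diagonal asymptotic expansion.) -/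

import Mathlib

open Real Filter Topology

/-!
Put `y = x - 5/2` and `d = 5/2 - 2q`. After division by `Γ(y - 1)` the quotient becomes
`(y - 1) ((y + 3/2) E(y) - y - (3/2 + a))`, where `E(y) = √(2π) e^{-(y+d)} (y+d)^{y-1/2} / Γ(y)` and
`3/2 + a = (-71/12 + 12q - 4q²)/2`. Stirling's formula gives `E(y) = 1 + a/y + b/y² + o(y⁻²)` with
the same `a = -(d²/2 + d/2 + 1/12)`, so that the limit is `b + 3a/2`.

The expansion of `E` needs `log Γ` up to `o(y⁻²)`. Binet's function `μ` satisfies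
`μ(y) - μ(y+1) = (y + 1/2) log(1 + 1/y) - 1`, which agrees with `1/(12y) - 1/(12(y+1))` up to the
increment of `1/(72y³)`; as `μ(y + n) → 0`, telescoping yields `|μ(y) - 1/(12y)| ≤ 1/(72y³)`.
-/

section Asymptotics

lemma abs_half_log_div_sub_le {x : ℝ} (hx₀ : 0 ≤ x) (hx₁ : x < 1) :
    |1 / 2 * log ((1 + x) / (1 - x)) - (x + x ^ 3 / (3 * (1 - x ^ 2)))| ≤
      2 / 3 * (x ^ 5 / (1 - x ^ 2)) := by
  have lower := sum_range_le_log_div hx₀ hx₁ 2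
  have upper := log_div_le_sum_range_add hx₀ hx₁ 2
  have : 0 < 1 - x ^ 2 := by nlinarith
  have geometric : x ^ 3 / (3 * (1 - x ^ 2)) = x ^ 3 / 3 + 1 / 3 * (x ^ 5 / (1 - x ^ 2)) := by
    field_simp
    ring
  have : 0 ≤ x ^ 5 / (1 - x ^ 2) := by positivity
  simp only [Finset.sum_range_succ, Finset.sum_range_zero] at lower upper
  norm_num only at lower upper
  rw [geometric, abs_le]
  constructor <;> linarith

lemma sum_range_add_log_one_sub_isBigO_pow (n : ℕ) :
    (fun u : ℝ ↦ (∑ i ∈ Finset.range n, u ^ (i + 1) / (i + 1)) + log (1 - u))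
      =O[𝓝 0] (· ^ (n + 1)) := by
  refine .of_bound 2 ?_
  filter_upwards [Metric.closedBall_mem_nhds (0 : ℝ) one_half_pos] with u hu
  replace hu : |u| ≤ 1 / 2 := by simpa using hu
  calc ‖(∑ i ∈ Finset.range n, u ^ (i + 1) / (i + 1)) + log (1 - u)‖
    _ ≤ |u| ^ (n + 1) / (1 - |u|) := abs_log_sub_add_sum_range_le (by linarith) n
    _ ≤ |u| ^ (n + 1) / (1 / 2) := by gcongr; linarith
    _ = 2 * ‖u ^ (n + 1)‖ := by rw [norm_pow, norm_eq_abs]; ring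

lemma tendsto_pow_mul_sum_range_add_log_one_sub_div (c : ℝ) (n : ℕ) :
    Tendsto (fun y : ℝ ↦ y ^ (n + 1) *
        ((∑ i ∈ Finset.range n, (c / y) ^ (i + 1) / (i + 1)) + log (1 - c / y)))
      atTop (𝓝 (-(c ^ (n + 1) / (n + 1)))) := by
  have remainder_isBigO := (Asymptotics.isBigO_refl (fun y : ℝ ↦ y ^ (n + 1)) atTop).mul
    ((sum_range_add_log_one_sub_isBigO_pow (n + 1)).comp_tendsto (tendsto_id.const_div_atTop c))
  have bound_tendsto : Tendsto (fun y : ℝ ↦ y ^ (n + 1) * (c / y) ^ (n + 2)) atTop (𝓝 0) := by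
    refine (tendsto_id.const_div_atTop (c ^ (n + 2))).congr' ?_
    filter_upwards [eventually_ne_atTop 0] with y hy
    rw [id, div_pow]
    field_simp
    ring
  have := (remainder_isBigO.trans_tendsto bound_tendsto).sub_const (c ^ (n + 1) / (n + 1))
  rw [zero_sub] at this
  refine this.congr' ?_
  filter_upwards [eventually_ne_atTop 0] with y hy
  have last_term : y ^ (n + 1) * ((c / y) ^ (n + 1) / (n + 1)) = c ^ (n + 1) / (n + 1) := by
    rw [← mul_div_assoc, ← mul_pow, mul_div_cancel₀ _ hy]
  simp only [Function.comp_apply, id, Finset.sum_range_succ, ← last_term]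
  ring

lemma tendsto_sq_mul_log_one_add_div_sub (c : ℝ) :
    Tendsto (fun y ↦ y ^ 2 * (log (1 + c / y) - c / y)) atTop (𝓝 (-c ^ 2 / 2)) := by
  convert tendsto_pow_mul_sum_range_add_log_one_sub_div (-c) 1 using 2
  · simp only [Finset.sum_range_one, neg_div, sub_neg_eq_add]
    push_cast
    ring
  · push_cast
    ring

lemma tendsto_cube_mul_log_one_add_div_sub (c : ℝ) :
    Tendsto (fun y ↦ y ^ 3 * (log (1 + c / y) - c / y + (c / y) ^ 2 / 2)) atTop
      (𝓝 (c ^ 3 / 3)) := by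
  convert tendsto_pow_mul_sum_range_add_log_one_sub_div (-c) 2 using 2
  · simp only [Finset.sum_range_succ, Finset.sum_range_zero, neg_div, sub_neg_eq_add]
    push_cast
    ring
  · push_cast
    ring

lemma tendsto_add_mul_log_one_add_div (a c : ℝ) :
    Tendsto (fun y ↦ (y + a) * log (1 + c / y)) atTop (𝓝 c) := by
  have log_tendsto : Tendsto (fun y ↦ log (1 + c / y)) atTop (𝓝 0) := by
    simpa using ((tendsto_id.const_div_atTop c).const_add 1).log (by norm_num)
  simpa [add_mul] using (tendsto_mul_log_one_add_div_atTop c).add (log_tendsto.const_mul a)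

lemma tendsto_id_mul_of_tendsto_sq_mul_sub {f : ℝ → ℝ} {a b : ℝ}
    (hf : Tendsto (fun y ↦ y ^ 2 * (f y - a / y)) atTop (𝓝 b)) :
    Tendsto (fun y ↦ y * f y) atTop (𝓝 a) := by
  have := (hf.div_atTop tendsto_id).add_const a
  rw [zero_add] at this
  refine this.congr' ?_
  filter_upwards [eventually_ne_atTop 0] with y hy
  simp only [id]
  field_simp
  ring

lemma tendsto_sq_mul_exp_sub_one_sub {f : ℝ → ℝ} {a b : ℝ}
    (hf : Tendsto (fun y ↦ y ^ 2 * (f y - a / y)) atTop (𝓝 b)) :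
    Tendsto (fun y ↦ y ^ 2 * (exp (f y) - 1 - a / y)) atTop (𝓝 (b + a ^ 2 / 2)) := by
  have id_mul_tendsto := tendsto_id_mul_of_tendsto_sq_mul_sub hf
  have f_tendsto : Tendsto f atTop (𝓝 0) := by
    refine (id_mul_tendsto.div_atTop tendsto_id).congr' ?_
    filter_upwards [eventually_ne_atTop 0] with y hy
    exact mul_div_cancel_left₀ _ hy
  have remainder_tendsto :
      Tendsto (fun y ↦ y ^ 2 * (exp (f y) - (1 + f y + f y ^ 2 / 2))) atTop (𝓝 0) := by
    have sq_isBigO : (fun y ↦ y ^ 2 * f y ^ 2) =O[atTop] (fun _ ↦ (1 : ℝ)) := by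
      simpa only [mul_pow] using (id_mul_tendsto.pow 2).isBigO_one ℝ
    have taylor := (exp_sub_sum_range_succ_isLittleO_pow 2).comp_tendsto f_tendsto
    have := ((Asymptotics.isBigO_refl (· ^ 2) atTop).mul_isLittleO taylor).trans_isBigO sq_isBigO
    simpa [Finset.sum_range_succ] using this.tendsto_div_nhds_zero
  have := (remainder_tendsto.add hf).add ((id_mul_tendsto.pow 2).div_const 2)
  rw [zero_add] at this
  exact this.congr fun y ↦ by ring

lemma tendsto_sub_one_mul_add_mul_sub {E : ℝ → ℝ} {a b : ℝ}
    (hE : Tendsto (fun y ↦ y ^ 2 * (E y - 1 - a / y)) atTop (𝓝 b)) (k : ℝ) :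
    Tendsto (fun y ↦ (y - 1) * ((y + k) * E y - y - (k + a))) atTop (𝓝 (b + k * a)) := by
  have inv_tendsto (c : ℝ) : Tendsto (fun y : ℝ ↦ 1 + c / y) atTop (𝓝 1) := by
    simpa using (tendsto_id.const_div_atTop c).const_add 1
  have := (inv_tendsto (-1)).mul (((inv_tendsto k).mul hE).add_const (k * a))
  rw [one_mul, one_mul] at this
  refine this.congr' ?_
  filter_upwards [eventually_ne_atTop 0] with y hy
  field_simp
  ring

lemma dist_le_sub_of_dist_succ_le_sub {α : Type*} [PseudoMetricSpace α] {f : ℕ → α} {g : ℕ → ℝ}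
    {a : α} {b : ℝ} (hfg : ∀ n, dist (f n) (f (n + 1)) ≤ g n - g (n + 1))
    (hf : Tendsto f atTop (𝓝 a)) (hg : Tendsto g atTop (𝓝 b)) :
    dist (f 0) a ≤ g 0 - b := by
  refine le_of_tendsto_of_tendsto' (tendsto_const_nhds.dist hf) (hg.const_sub (g 0)) fun n ↦ ?_
  rw [← Finset.sum_range_sub']
  exact dist_le_range_sum_of_dist_le n fun _ ↦ hfg _

end Asymptotics

section Binet

/-- Binet's function `μ(y)`, the error of Stirling's approximation to `log Γ(y)`; it is meaningful
for `0 < y`. -/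
noncomputable def binet (y : ℝ) : ℝ :=
  log (Gamma y) - ((y - 1 / 2) * log y - y + log (2 * π) / 2)

variable {y : ℝ}

lemma log_Gamma_add_one (hy : 0 < y) : log (Gamma (y + 1)) = log (Gamma y) + log y := by
  rw [Gamma_add_one hy.ne', log_mul hy.ne' (Gamma_pos_of_pos hy).ne', add_comm]

lemma binet_sub_binet_add_one (hy : 0 < y) :
    binet y - binet (y + 1) = (y + 1 / 2) * log ((y + 1) / y) - 1 := by
  rw [binet, binet, log_Gamma_add_one hy, log_div (by positivity) hy.ne']
  ring

lemma abs_mul_log_add_one_div_sub_le (hy : 0 < y) :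
    |(y + 1 / 2) * log ((y + 1) / y) - 1 - (1 / (12 * y) - 1 / (12 * (y + 1)))| ≤
      1 / (6 * (y * (y + 1) * (2 * y + 1) ^ 2)) := by
  have hx : (2 * y + 1)⁻¹ < 1 := inv_lt_one_of_one_lt₀ (by linarith)
  have one_sub_sq : 1 - (2 * y + 1)⁻¹ ^ 2 = 4 * y * (y + 1) / (2 * y + 1) ^ 2 := by
    field_simp
    ring
  have log_arg : (1 + (2 * y + 1)⁻¹) / (1 - (2 * y + 1)⁻¹) = (y + 1) / y := by
    have : 1 - (2 * y + 1)⁻¹ = 2 * y / (2 * y + 1) := by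
      field_simp
      ring
    rw [this]
    field_simp
    ring
  have series := abs_half_log_div_sub_le (by positivity) hx
  rw [log_arg, one_sub_sq] at series
  calc |(y + 1 / 2) * log ((y + 1) / y) - 1 - (1 / (12 * y) - 1 / (12 * (y + 1)))|
    _ = |(2 * y + 1) * (1 / 2 * log ((y + 1) / y) -
          ((2 * y + 1)⁻¹ + (2 * y + 1)⁻¹ ^ 3 / (3 * (4 * y * (y + 1) / (2 * y + 1) ^ 2))))| := by
      congr 1
      field_simp
      ring
    _ ≤ (2 * y + 1) *
          (2 / 3 * ((2 * y + 1)⁻¹ ^ 5 / (4 * y * (y + 1) / (2 * y + 1) ^ 2))) := by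
      rw [abs_mul, abs_of_pos (by positivity)]
      gcongr
    _ = 1 / (6 * (y * (y + 1) * (2 * y + 1) ^ 2)) := by
      field_simp
      norm_num

lemma abs_binet_sub_sub_add_one_le (hy : 0 < y) :
    |(binet y - 1 / (12 * y)) - (binet (y + 1) - 1 / (12 * (y + 1)))| ≤
      1 / (72 * y ^ 3) - 1 / (72 * (y + 1) ^ 3) := by
  calc |(binet y - 1 / (12 * y)) - (binet (y + 1) - 1 / (12 * (y + 1)))|
    _ = |(y + 1 / 2) * log ((y + 1) / y) - 1 - (1 / (12 * y) - 1 / (12 * (y + 1)))| := by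
      rw [← binet_sub_binet_add_one hy]
      ring_nf
    _ ≤ 1 / (6 * (y * (y + 1) * (2 * y + 1) ^ 2)) := abs_mul_log_add_one_div_sub_le hy
    _ ≤ 1 / (72 * y ^ 3) - 1 / (72 * (y + 1) ^ 3) := by
      rw [div_sub_div _ _ (by positivity) (by positivity),
        div_le_div_iff₀ (by positivity) (by positivity), ← sub_nonneg]
      ring_nf
      positivity

lemma tendsto_log_Gamma_add_nat_sub (hy : 0 < y) :
    Tendsto (fun n : ℕ ↦ log (Gamma (y + (n + 1 : ℕ))) - y * log n - log n.factorial)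
      atTop (𝓝 0) := by
  have := (BohrMollerup.tendsto_log_gamma hy).const_sub (log (Gamma y))
  rw [sub_self] at this
  refine this.congr fun n ↦ ?_
  have product :=
    BohrMollerup.f_add_nat_eq (f := fun y ↦ log (Gamma y)) log_Gamma_add_one hy (n + 1)
  rw [BohrMollerup.logGammaSeq, product]
  ring

lemma tendsto_binet_add_nat (hy : 0 < y) :
    Tendsto (fun n : ℕ ↦ binet (y + n)) atTop (𝓝 0) := by
  rw [← tendsto_add_atTop_iff_nat 1]
  have stirling := (Stirling.tendsto_stirlingSeq_sqrt_pi.log (by positivity)).sub_const (log √π)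
  have log_shift := ((tendsto_add_mul_log_one_add_div (y + 1 / 2) (y + 1)).sub_const
    (y + 1)).comp tendsto_natCast_atTop_atTop
  have := ((tendsto_log_Gamma_add_nat_sub hy).add stirling).sub log_shift
  rw [sub_self, sub_self, add_zero, sub_zero] at this
  refine this.congr' ?_
  filter_upwards [eventually_gt_atTop 0] with n hn
  have hn' : (0 : ℝ) < n := Nat.cast_pos.mpr hn
  have one_add_div : 1 + (y + 1) / n = (y + (n + 1 : ℕ)) / n := by
    push_cast
    field_simp
    ring
  rw [Function.comp_apply, one_add_div, binet, Stirling.log_stirlingSeq_formula,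
    log_div (by positivity) hn'.ne', log_div hn'.ne' (by positivity), log_exp,
    log_mul two_ne_zero hn'.ne', log_mul two_ne_zero pi_ne_zero, log_sqrt pi_pos.le]
  push_cast
  ring

lemma abs_binet_sub_le (hy : 0 < y) : |binet y - 1 / (12 * y)| ≤ 1 / (72 * y ^ 3) := by
  have add_nat_tendsto : Tendsto (fun n : ℕ ↦ y + n) atTop atTop :=
    tendsto_atTop_add_const_left _ _ tendsto_natCast_atTop_atTop
  have remainder_tendsto :
      Tendsto (fun n : ℕ ↦ binet (y + n) - 1 / (12 * (y + n))) atTop (𝓝 0) := by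
    simpa using (tendsto_binet_add_nat hy).sub
      ((add_nat_tendsto.const_mul_atTop (by norm_num : (0 : ℝ) < 12)).const_div_atTop 1)
  have bound_tendsto : Tendsto (fun n : ℕ ↦ 1 / (72 * (y + n) ^ 3)) atTop (𝓝 0) :=
    (((tendsto_pow_atTop three_ne_zero).comp add_nat_tendsto).const_mul_atTop
      (by norm_num : (0 : ℝ) < 72)).const_div_atTop 1
  have := dist_le_sub_of_dist_succ_le_sub (fun n ↦ ?_) remainder_tendsto bound_tendsto
  · simpa using this
  · rw [dist_eq, Nat.cast_succ, ← add_assoc]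
    exact abs_binet_sub_sub_add_one_le (by positivity : 0 < y + n)

lemma tendsto_sq_mul_binet_sub :
    Tendsto (fun y ↦ y ^ 2 * (binet y - 1 / (12 * y))) atTop (𝓝 0) := by
  refine squeeze_zero_norm' ?_ (tendsto_id.const_div_atTop (1 / 72 : ℝ))
  filter_upwards [eventually_gt_atTop 0] with y hy
  calc ‖y ^ 2 * (binet y - 1 / (12 * y))‖
    _ = y ^ 2 * |binet y - 1 / (12 * y)| := by simp
    _ ≤ y ^ 2 * (1 / (72 * y ^ 3)) := by gcongr; exact abs_binet_sub_le hy
    _ = 1 / 72 / id y := by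
      rw [id]
      field_simp

end Binet

section StirlingRatio

/-- The ratio `√(2π) e^{-(y+d)} (y+d)^{y-1/2} / Γ(y)` of a shifted Stirling approximation to the
Gamma function. -/
noncomputable def stirlingRatio (d y : ℝ) : ℝ :=
  √(2 * π) * exp (-(y + d)) * (y + d) ^ (y - 1 / 2) / Gamma y

/-- The coefficient of `1/y` in the expansion of `stirlingRatio d y` as `y → ∞`. -/
noncomputable def stirlingRatioCoeff (d : ℝ) : ℝ :=
  -(d ^ 2 / 2 + d / 2 + 1 / 12)

variable {d y : ℝ}

lemma stirlingRatio_mul_Gamma (hy : 0 < y) :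
    stirlingRatio d y * Gamma y = √(2 * π) * exp (-(y + d)) * (y + d) ^ (y - 1 / 2) :=
  div_mul_cancel₀ _ (Gamma_pos_of_pos hy).ne'

lemma stirlingRatio_pos (hy : 0 < y) (hyd : 0 < y + d) : 0 < stirlingRatio d y := by
  have : 0 < Gamma y := Gamma_pos_of_pos hy
  unfold stirlingRatio
  positivity

lemma log_stirlingRatio (hy : 0 < y) (hyd : 0 < y + d) :
    log (stirlingRatio d y) = (y - 1 / 2) * log (1 + d / y) - d - binet y := by
  have hΓ := Gamma_pos_of_pos hy
  have hpow : 0 < (y + d) ^ (y - 1 / 2) := rpow_pos_of_pos hyd _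
  have one_add_div : 1 + d / y = (y + d) / y := by field_simp
  rw [stirlingRatio, log_div (by positivity) hΓ.ne', log_mul (by positivity) hpow.ne',
    log_mul (by positivity) (by positivity), log_exp, log_rpow hyd, log_sqrt (by positivity),
    one_add_div, log_div hyd.ne' hy.ne', binet]
  ring

lemma tendsto_sq_mul_log_stirlingRatio_sub (d : ℝ) :
    Tendsto (fun y ↦ y ^ 2 * (log (stirlingRatio d y) - stirlingRatioCoeff d / y)) atTop
      (𝓝 (d ^ 3 / 3 + d ^ 2 / 4)) := by
  have := ((tendsto_cube_mul_log_one_add_div_sub d).sub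
    ((tendsto_sq_mul_log_one_add_div_sub d).div_const 2)).sub tendsto_sq_mul_binet_sub
  rw [show d ^ 3 / 3 - -d ^ 2 / 2 / 2 - 0 = d ^ 3 / 3 + d ^ 2 / 4 by ring] at this
  refine this.congr' ?_
  filter_upwards [eventually_gt_atTop 0, eventually_gt_atTop (-d)] with y hy hyd
  rw [log_stirlingRatio hy (by linarith), stirlingRatioCoeff]
  field_simp
  ring

lemma tendsto_sq_mul_stirlingRatio_sub (d : ℝ) :
    Tendsto (fun y ↦ y ^ 2 * (stirlingRatio d y - 1 - stirlingRatioCoeff d / y)) atTop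
      (𝓝 (d ^ 3 / 3 + d ^ 2 / 4 + stirlingRatioCoeff d ^ 2 / 2)) := by
  refine (tendsto_sq_mul_exp_sub_one_sub (tendsto_sq_mul_log_stirlingRatio_sub d)).congr' ?_
  filter_upwards [eventually_gt_atTop 0, eventually_gt_atTop (-d)] with y hy hyd
  rw [exp_log (stirlingRatio_pos hy (by linarith))]

end StirlingRatio

lemma mul_Gamma_sub_div_Gamma_sub_one {y : ℝ} (hy : 1 < y) (A p : ℝ) :
    (A * Gamma y - Gamma (y + 1) - p * Gamma y) / Gamma (y - 1) = (y - 1) * (A - y - p) := by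
  have recurrence : Gamma y = (y - 1) * Gamma (y - 1) := by
    simpa using Gamma_add_one (sub_pos.mpr hy).ne'
  have hΓ := (Gamma_pos_of_pos (sub_pos.mpr hy)).ne'
  rw [Gamma_add_one (by positivity), recurrence]
  field_simp

/-- the next subleading diagonal asymptotics identify the polynomial
`𝒫_2(q) = 11545/288 - 131q + 419q²/3 - 176q³/3 + 8q⁴`. -/
theorem diagonal_subleading_P2 (q : ℝ) :
    Tendsto
      (fun x : ℝ =>
        (Real.sqrt (2 * Real.pi) * Real.exp (2 * q - x) * (x - 1) * (x - 2 * q) ^ (x - 3) -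
            Real.Gamma (x - 3 / 2) -
            1 / 2 * Real.Gamma (x - 5 / 2) * (-(71 / 12) + 12 * q - 4 * q ^ 2)) /
          Real.Gamma (x - 7 / 2))
      atTop
      (𝓝 (1 / 4 * (11545 / 288 - 131 * q + 419 * q ^ 2 / 3 - 176 * q ^ 3 / 3 + 8 * q ^ 4))) := by
  have expansion := (tendsto_sub_one_mul_add_mul_sub
    (tendsto_sq_mul_stirlingRatio_sub (5 / 2 - 2 * q)) (3 / 2)).comp
      (tendsto_atTop_add_const_right atTop (-(5 / 2 : ℝ)) tendsto_id)
  convert expansion.congr' ?_ using 2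
  · rw [stirlingRatioCoeff]
    ring
  · filter_upwards [eventually_gt_atTop (7 / 2)] with x hx
    rw [Function.comp_apply, id, ← mul_Gamma_sub_div_Gamma_sub_one (by linarith), mul_assoc,
      stirlingRatio_mul_Gamma (by linarith), stirlingRatioCoeff]
    ring_nf
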